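/- arXiv:1604.07575 — 2 statements merged into one kernel-verified Lean document; each statement's English description precedes it below -/
import Mathlib

section
/- Let (v_k)_{k≥1} be a sequence of positive reals with ∑_{k=1}^∞ v_k = X < ∞ satisfying: (i) A(v) + A(v) = [0, 2X]; (ii) for every a ∈ (0, 2X) there exists a nondegenerate interval I_a ⊆ A(v) such that for every t ∈ I_a there exists z ∈ A(v) with t + z = a. Let (w_k)_{k≥1} be a sequence of nonzero reals with alternating signs (w_k · w_{k+1} < 0 for all k) such that ∑_{k=1}^∞ w_k is conditionally convergent. Define the sequence of pairs in ℝ² by x_{4k−3} = x_{4k−2} = v_k, x_{4k−1} = x_{4k} = −v_k, and y_{2k−1} = w_k, y_{2k} = 0 for every k ≥ 1. Then A((x_n, y_n)_n) = (−2X, 2X) × ℝ. -/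
open Filter Topology Pointwise

/-- The achievement set of a sequence: all limits of partial sums of subseries. -/
def achv {X : Type*} [AddCommMonoid X] [TopologicalSpace X] (x : ℕ → X) : Set X :=
  {s | ∃ ε : ℕ → Bool,
    Tendsto (fun N => ∑ n ∈ Finset.range N, if ε n then x n else 0) atTop (𝓝 s)}

/-- The selected sum after `n` steps of the greedy choice aiming at `b`: the first `N` indices
are selected according to `δ`; afterwards a term is selected exactly when it moves the sum
strictly towards `b`. -/
noncomputable def greedySum (w : ℕ → ℝ) (b : ℝ) (N : ℕ) (δ : ℕ → Bool) : ℕ → ℝ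
  | 0 => 0
  | n + 1 => greedySum w b N δ n +
      if n < N then (if δ n then w n else 0)
      else if greedySum w b N δ n < b then max (w n) 0
      else if b < greedySum w b N δ n then min (w n) 0
      else 0

/-- A sequence which, while below `b`, grows by the positive parts of a null sequence with
divergent positive part gets within `e` of `b`. -/
lemma exists_abs_sub_le_of_lt {w S : ℕ → ℝ} {b e : ℝ} {M : ℕ}
    (hpos : Tendsto (fun n => ∑ k ∈ Finset.range n, max (w k) 0) atTop atTop)
    (hM : ∀ n ≥ M, |w n| < e) (hS : ∀ n ≥ M, S n < b → S (n + 1) = S n + max (w n) 0)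
    (h0 : S M < b) : ∃ n ≥ M, |S n - b| ≤ e := by
  by_contra! hcon
  have key : ∀ n ≥ M, S n < b ∧
      S n = S M + (∑ k ∈ Finset.range n, max (w k) 0) - ∑ k ∈ Finset.range M, max (w k) 0 := by
    intro n hn
    induction n, hn using Nat.le_induction with
    | base => exact ⟨h0, by ring⟩
    | succ n hn ih =>
      obtain ⟨h1, h2⟩ := ih
      have h3 := hS n hn h1
      have h4 := hcon n hn
      have h5 := hM n hn
      refine ⟨?_, by rw [h3, Finset.sum_range_succ, h2]; ring⟩
      rw [abs_of_neg (by linarith)] at h4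
      have : max (w n) 0 < e := max_lt (lt_of_abs_lt h5) ((abs_nonneg _).trans_lt h5)
      linarith
  obtain ⟨n, hn, hnM⟩ := ((hpos.eventually_ge_atTop
    (b - S M + ∑ k ∈ Finset.range M, max (w k) 0)).and (eventually_ge_atTop M)).exists
  have := key n hnM
  linarith [this.1, this.2]

lemma tendsto_of_greedy {w S : ℕ → ℝ} {b : ℝ} {N : ℕ} (hw : Tendsto w atTop (𝓝 0))
    (hpos : Tendsto (fun n => ∑ k ∈ Finset.range n, max (w k) 0) atTop atTop)
    (hneg : Tendsto (fun n => ∑ k ∈ Finset.range n, max (-w k) 0) atTop atTop)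
    (hlt : ∀ n ≥ N, S n < b → S (n + 1) = S n + max (w n) 0)
    (hgt : ∀ n ≥ N, b < S n → S (n + 1) = S n + min (w n) 0)
    (heq : ∀ n ≥ N, S n = b → S (n + 1) = S n) : Tendsto S atTop (𝓝 b) := by
  rw [Metric.tendsto_atTop]
  intro e he
  obtain ⟨M₀, hM₀⟩ := Metric.tendsto_atTop.1 hw (e / 2) (by linarith)
  simp only [Real.dist_eq, sub_zero] at hM₀ ⊢
  obtain ⟨M, hMM₀, hMN⟩ : ∃ M, M₀ ≤ M ∧ N ≤ M := ⟨max M₀ N, le_max_left _ _, le_max_right _ _⟩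
  have hsmall : ∀ n ≥ M, |w n| < e / 2 := fun n hn => hM₀ n (hMM₀.trans hn)
  have hentry : ∃ n ≥ M, |S n - b| ≤ e / 2 := by
    rcases lt_trichotomy (S M) b with h | h | h
    · exact exists_abs_sub_le_of_lt hpos hsmall (fun n hn => hlt n (hMN.trans hn)) h
    · exact ⟨M, le_rfl, by simp [h]; linarith⟩
    · obtain ⟨n, hn, h'⟩ := exists_abs_sub_le_of_lt (w := fun n => -w n) (S := fun n => -S n)
        (b := -b) (e := e / 2) (M := M) hneg (by simpa using hsmall) (by
          intro n hn h'
          rw [hgt n (hMN.trans hn) (by linarith), ← neg_zero, max_neg_neg]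
          simp only [neg_zero]
          ring) (by linarith)
      refine ⟨n, hn, ?_⟩
      rw [abs_sub_comm]
      convert h' using 2
      ring
  obtain ⟨n₀, hn₀, h₀⟩ := hentry
  refine ⟨n₀, fun n hn => ?_⟩
  suffices |S n - b| ≤ e / 2 by linarith
  induction n, hn using Nat.le_induction with
  | base => exact h₀
  | succ n hn ih =>
    have h1 := hsmall n (hn₀.trans hn)
    have hnN : N ≤ n := hMN.trans (hn₀.trans hn)
    rw [abs_lt] at h1
    rw [abs_le] at ih ⊢
    rcases lt_trichotomy (S n) b with h | h | h
    · rw [hlt n hnN h]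
      have h2 : max (w n) 0 < e / 2 := max_lt h1.2 (by linarith)
      have h3 := le_max_right (w n) 0
      constructor <;> linarith
    · rw [heq n hnN h]
      exact ih
    · rw [hgt n hnN h]
      have h2 : -(e / 2) < min (w n) 0 := lt_min h1.1 (by linarith)
      have h3 := min_le_right (w n) 0
      constructor <;> linarith

/-- A null sequence whose positive and negative parts both diverge has subseries converging to
any prescribed real, with any prescribed initial selection. -/
lemma exists_subseries_tendsto {w : ℕ → ℝ} (hw : Tendsto w atTop (𝓝 0))
    (hpos : Tendsto (fun n => ∑ k ∈ Finset.range n, max (w k) 0) atTop atTop)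
    (hneg : Tendsto (fun n => ∑ k ∈ Finset.range n, max (-w k) 0) atTop atTop)
    (b : ℝ) (N : ℕ) (δ : ℕ → Bool) :
    ∃ α : ℕ → Bool, (∀ n < N, α n = δ n) ∧
      Tendsto (fun n => ∑ k ∈ Finset.range n, if α k then w k else 0) atTop (𝓝 b) := by
  set S := greedySum w b N δ
  have hS : ∀ n, S (n + 1) = S n + if n < N then (if δ n then w n else 0)
      else if S n < b then max (w n) 0 else if b < S n then min (w n) 0 else 0 := fun n => rfl
  let α : ℕ → Bool := fun n => if n < N then δ n else
    decide ((S n < b ∧ 0 ≤ w n) ∨ (b < S n ∧ w n ≤ 0))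
  refine ⟨α, fun n hn => by simp [α, hn], ?_⟩
  have hsum : (fun n => ∑ k ∈ Finset.range n, if α k then w k else 0) = S := by
    funext n
    induction n with
    | zero => rfl
    | succ n ih =>
      rw [Finset.sum_range_succ, ih, hS]
      congr 1
      by_cases hn : n < N
      · simp [α, hn]
      · simp only [α, hn, if_false, decide_eq_true_eq]
        rcases lt_trichotomy (S n) b with h | h | h
        · rcases le_total 0 (w n) with h' | h'
          · simp [h, h']
          · simp only [h, true_and, h.not_gt, false_and, or_false, if_true, max_eq_right h']
            split_ifs with h''
            · exact le_antisymm h' h''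
            · rfl
        · simp [h]
        · rcases le_total (w n) 0 with h' | h'
          · simp [h, h', h.not_gt]
          · simp only [h, true_and, h.not_gt, false_and, false_or, if_true, if_false,
              min_eq_right h']
            split_ifs with h''
            · exact le_antisymm h'' h'
            · rfl
  rw [hsum]
  refine tendsto_of_greedy (N := N) hw hpos hneg ?_ ?_ ?_
  · intro n hn h
    simp [hS, hn.not_gt, h]
  · intro n hn h
    simp [hS, hn.not_gt, h, h.not_gt]
  · intro n hn h
    simp [hS, hn.not_gt, h]

/-- The positive parts of a conditionally convergent series diverge. -/
lemma tendsto_sum_max_atTop {w : ℕ → ℝ}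
    (hwconv : ∃ s, Tendsto (fun N => ∑ k ∈ Finset.range N, w k) atTop (𝓝 s))
    (hwnabs : ¬ Summable fun k => |w k|) :
    Tendsto (fun n => ∑ k ∈ Finset.range n, max (w k) 0) atTop atTop := by
  rw [← not_summable_iff_tendsto_nat_atTop_of_nonneg fun n => le_max_right _ _]
  intro hsum
  obtain ⟨s, hs⟩ := hwconv
  refine hwnabs ?_
  refine ((hasSum_iff_tendsto_nat_of_nonneg (fun k => abs_nonneg (w k))
    (2 * (∑' k, max (w k) 0) - s)).2 ?_).summable
  refine ((hsum.hasSum.tendsto_sum_nat.const_mul 2).sub hs).congr fun n => ?_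
  rw [Finset.mul_sum, ← Finset.sum_sub_distrib]
  refine Finset.sum_congr rfl fun k _ => ?_
  rcases le_total 0 (w k) with h | h
  · rw [max_eq_left h, abs_of_nonneg h]; ring
  · rw [max_eq_right h, abs_of_nonpos h]; ring

lemma neg_one_pow_mul_nonneg_of_alternating {w : ℕ → ℝ} (halt : ∀ k, w k * w (k + 1) < 0)
    (h0 : 0 ≤ w 0) (k : ℕ) : 0 ≤ (-1) ^ k * w k := by
  induction k with
  | zero => simpa using h0
  | succ k ih =>
    rcases neg_one_pow_eq_or ℝ k with h | h <;> rw [pow_succ, h] <;> rw [h] at ih <;>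
      nlinarith [halt k]

/-- For an alternating series which is not absolutely convergent, the series with all signs
made equal has divergent partial sums. -/
lemma not_tendsto_sum_neg_one_pow_mul {w : ℕ → ℝ} (halt : ∀ k, w k * w (k + 1) < 0)
    (hwnabs : ¬ Summable fun k => |w k|) (s : ℝ) :
    ¬ Tendsto (fun N => ∑ k ∈ Finset.range N, (-1) ^ k * w k) atTop (𝓝 s) := by
  intro hs
  refine hwnabs ?_
  have habs : ∀ k, |(-1) ^ k * w k| = |w k| := fun k => by simp [abs_mul]
  simp_rw [← habs]
  rw [summable_abs_iff]
  rcases le_total 0 (w 0) with h | h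
  · exact ((hasSum_iff_tendsto_nat_of_nonneg
      (neg_one_pow_mul_nonneg_of_alternating halt h) s).2 hs).summable
  · have hn : ∀ k, 0 ≤ (-1) ^ k * -w k :=
      neg_one_pow_mul_nonneg_of_alternating (w := fun k => -w k) (by simpa using halt)
        (by linarith)
    rw [← summable_neg_iff]
    refine ((hasSum_iff_tendsto_nat_of_nonneg (f := fun k => -((-1) ^ k * w k))
      (fun k => by have := hn k; linarith) (-s)).2 ?_).summable
    simpa [Finset.sum_neg_distrib] using hs.neg

lemma HasSum.of_mod_four {f : ℕ → ℝ} {a b c d : ℝ} (ha : HasSum (fun k => f (4 * k)) a)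
    (hb : HasSum (fun k => f (4 * k + 1)) b) (hc : HasSum (fun k => f (4 * k + 2)) c)
    (hd : HasSum (fun k => f (4 * k + 3)) d) : HasSum f (a + b + c + d) := by
  have h1 : HasSum (fun k => f (2 * k)) (a + c) :=
    HasSum.even_add_odd (f := fun k => f (2 * k)) (by convert ha using 3; ring)
      (by convert hc using 3; ring)
  have h2 : HasSum (fun k => f (2 * k + 1)) (b + d) :=
    HasSum.even_add_odd (f := fun k => f (2 * k + 1)) (by convert hb using 3; ring)
      (by convert hd using 3; ring)
  convert h1.even_add_odd h2 using 1
  ring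

/-- A sum over the even indices below `N` is a sum over half the indices. -/
lemma sum_range_even (u : ℕ → ℝ) (N : ℕ) :
    (∑ n ∈ Finset.range N, if n % 2 = 0 then u (n / 2) else 0) =
      ∑ k ∈ Finset.range ((N + 1) / 2), u k := by
  induction N with
  | zero => simp
  | succ N ih =>
    rw [Finset.sum_range_succ, ih]
    rcases Nat.even_or_odd' N with ⟨m, rfl | rfl⟩
    · rw [show (2 * m + 1 + 1) / 2 = m + 1 by omega, show (2 * m + 1) / 2 = m by omega,
        show 2 * m / 2 = m by omega, Finset.sum_range_succ]
      simp
    · rw [show (2 * m + 1 + 1 + 1) / 2 = m + 1 by omega,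
        show (2 * m + 1 + 1) / 2 = m + 1 by omega, if_neg (by omega), add_zero]

lemma tendsto_sum_range_even_iff {u : ℕ → ℝ} {s : ℝ} :
    Tendsto (fun N => ∑ n ∈ Finset.range N, if n % 2 = 0 then u (n / 2) else 0) atTop (𝓝 s) ↔
      Tendsto (fun N => ∑ k ∈ Finset.range N, u k) atTop (𝓝 s) := by
  simp_rw [sum_range_even]
  constructor
  · intro h
    have h2 : Tendsto (fun N : ℕ => 2 * N) atTop atTop :=
      tendsto_id.const_mul_atTop' (by norm_num)
    refine (h.comp h2).congr fun N => ?_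
    simp only [Function.comp]
    rw [show (2 * N + 1) / 2 = N by omega]
  · intro h
    refine h.comp (tendsto_atTop_mono (f := fun N : ℕ => N / 2) (fun N => by omega) ?_)
    exact Nat.tendsto_div_const_atTop (by norm_num)

section Subsums

variable {v : ℕ → ℝ} {X : ℝ}

lemma hasSum_subsum (hv : ∀ k, 0 < v k) (hX : HasSum v X) (ε : ℕ → Bool) :
    ∃ s, HasSum (fun k => if ε k then v k else 0) s := by
  refine (Summable.of_nonneg_of_le (fun k => ?_) (fun k => ?_) hX.summable :
    Summable fun k => if ε k then v k else 0)
  · split_ifs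
    exacts [(hv k).le, le_rfl]
  · split_ifs
    exacts [le_rfl, (hv k).le]

lemma exists_hasSum_of_mem_achv (hv : ∀ k, 0 < v k) (hX : HasSum v X) {s : ℝ}
    (hs : s ∈ achv v) : ∃ ε : ℕ → Bool, HasSum (fun k => if ε k then v k else 0) s := by
  obtain ⟨ε, hε⟩ := hs
  obtain ⟨t, ht⟩ := hasSum_subsum hv hX ε
  exact ⟨ε, tendsto_nhds_unique ht.tendsto_sum_nat hε ▸ ht⟩

lemma HasSum.compl_subsum (hX : HasSum v X) {ε : ℕ → Bool} {s : ℝ}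
    (hs : HasSum (fun k => if ε k then v k else 0) s) :
    HasSum (fun k => if !ε k then v k else 0) (X - s) := by
  refine (hX.sub hs).congr_fun fun k => ?_
  cases ε k <;> simp

lemma sum_range_le_subsum (hv : ∀ k, 0 < v k) {ε : ℕ → Bool} {s : ℝ} {K : ℕ}
    (hs : HasSum (fun k => if ε k then v k else 0) s) (hε : ∀ k < K, ε k = true) :
    ∑ k ∈ Finset.range K, v k ≤ s := by
  refine le_trans (Finset.sum_le_sum fun k hk => ?_)
    (sum_le_hasSum (Finset.range K) (fun k _ => ?_) hs)
  · simp [hε k (Finset.mem_range.1 hk)]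
  · split_ifs
    exacts [(hv k).le, le_rfl]

lemma subsum_le_sub_sum_range (hv : ∀ k, 0 < v k) (hX : HasSum v X) {ε : ℕ → Bool} {s : ℝ}
    {K : ℕ} (hs : HasSum (fun k => if ε k then v k else 0) s) (hε : ∀ k < K, ε k = false) :
    s ≤ X - ∑ k ∈ Finset.range K, v k := by
  have := sum_range_le_subsum (ε := fun k => !ε k) (K := K) hv (hX.compl_subsum hs)
    fun k hk => by simp [hε k hk]
  linarith

lemma sub_mem_of_achv_add_achv (hv : ∀ k, 0 < v k) (hX : HasSum v X)
    (hi : achv v + achv v = Set.Icc 0 (2 * X)) {a : ℝ} (ha : |a| ≤ X) :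
    ∃ (β γ : ℕ → Bool) (s t : ℝ), HasSum (fun k => if β k then v k else 0) s ∧
      HasSum (fun k => if γ k then v k else 0) t ∧ s - t = a := by
  rw [abs_le] at ha
  have hmem : a + X ∈ achv v + achv v := by
    rw [hi]
    constructor <;> linarith
  obtain ⟨s, hs, t, ht, hst⟩ := Set.mem_add.1 hmem
  obtain ⟨β, hβ⟩ := exists_hasSum_of_mem_achv hv hX hs
  obtain ⟨γ, hγ⟩ := exists_hasSum_of_mem_achv hv hX ht
  exact ⟨β, fun k => !γ k, s, X - t, hβ, hX.compl_subsum hγ, by linarith⟩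

end Subsums

/-- A subsum of a signed series is at most the sum of the positive terms, with equality only
for the selection of exactly the positive terms. -/
lemma subsum_signed_le {V : ℕ → ℝ} {P : ℕ → Prop} [DecidablePred P] {S : ℝ} {ε : ℕ → Bool}
    {a : ℝ} (hV : ∀ n, 0 < V n) (hVs : Summable V)
    (hg : HasSum (fun n => if P n then V n else 0) S)
    (h : Tendsto (fun N => ∑ n ∈ Finset.range N, if ε n then (if P n then V n else -V n) else 0)
      atTop (𝓝 a)) :
    a ≤ S ∧ (a = S → ∀ n, ε n = true ↔ P n) := by
  set f : ℕ → ℝ := fun n => if ε n then (if P n then V n else -V n) else 0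
  have hfs : Summable f := by
    refine Summable.of_norm_bounded hVs fun n => ?_
    have := hV n
    simp only [f]
    split_ifs <;> simp [abs_of_pos this, this.le]
  have hf : HasSum f a := tendsto_nhds_unique hfs.hasSum.tendsto_sum_nat h ▸ hfs.hasSum
  have hle : ∀ n, f n ≤ if P n then V n else 0 := by
    intro n
    have := hV n
    simp only [f]
    split_ifs <;> linarith
  refine ⟨hasSum_le hle hf hg, fun ha n => ?_⟩
  by_contra hn
  have hlt : f n < if P n then V n else 0 := by
    have := hV n
    simp only [f]
    by_cases h1 : ε n = true <;> by_cases h2 : P n <;> simp_all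
  exact (hasSum_lt hle hlt hf hg).ne ha

/-- A subsum of `v₀, v₀, -v₀, -v₀, v₁, …` lies in `[-2X, 2X]`, and an endpoint is attained only
by selecting all terms of one sign. -/
lemma subsum_double_signed_mem {v : ℕ → ℝ} {X : ℝ} (hv : ∀ k, 0 < v k) (hX : HasSum v X)
    {ε : ℕ → Bool} {a : ℝ} (h : Tendsto (fun N => ∑ n ∈ Finset.range N,
      if ε n then (if n % 4 ≤ 1 then v (n / 4) else -v (n / 4)) else 0) atTop (𝓝 a)) :
    (a ≤ 2 * X ∧ (a = 2 * X → ∀ n, ε n = true ↔ n % 4 ≤ 1)) ∧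
      (-a ≤ 2 * X ∧ (-a = 2 * X → ∀ n, ε n = true ↔ ¬ n % 4 ≤ 1)) := by
  have hV : HasSum (fun n : ℕ => v (n / 4)) (X + X + X + X) := by
    refine HasSum.of_mod_four (f := fun n => v (n / 4)) ?_ ?_ ?_ ?_ <;>
      convert hX using 3 <;> omega
  have hg : HasSum (fun n : ℕ => if n % 4 ≤ 1 then v (n / 4) else 0) (X + X + 0 + 0) := by
    refine HasSum.of_mod_four (f := fun n : ℕ => if n % 4 ≤ 1 then v (n / 4) else 0) ?_ ?_ ?_ ?_
    · convert hX using 2 with k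
      rw [if_pos (by omega), show 4 * k / 4 = k by omega]
    · convert hX using 2 with k
      rw [if_pos (by omega), show (4 * k + 1) / 4 = k by omega]
    · convert hasSum_zero using 2 with k
      rw [if_neg (by omega)]
    · convert hasSum_zero using 2 with k
      rw [if_neg (by omega)]
  have hg' : HasSum (fun n : ℕ => if ¬ n % 4 ≤ 1 then v (n / 4) else 0) (2 * X) := by
    have hsub := hV.sub hg
    rw [show X + X + X + X - (X + X + 0 + 0) = 2 * X by ring] at hsub
    refine hsub.congr_fun fun n => ?_
    by_cases hn : n % 4 ≤ 1 <;> simp [hn]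
  rw [show X + X + 0 + 0 = 2 * X by ring] at hg
  refine ⟨subsum_signed_le (fun n => hv (n / 4)) hV.summable hg h,
    subsum_signed_le (fun n => hv (n / 4)) hV.summable hg' ?_⟩
  refine h.neg.congr fun N => ?_
  rw [← Finset.sum_neg_distrib]
  refine Finset.sum_congr rfl fun n _ => ?_
  by_cases h1 : ε n = true <;> by_cases h2 : n % 4 ≤ 1 <;> simp [h1, h2]

/-- For `|a| < 2X`, a selection of the terms `(v_k, w_{2k})` and `(-v_k, w_{2k+1})` with second
coordinate sum `b` can be made so that the first coordinate sum is within `X` of `a`. -/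
lemma exists_selection_near {v w : ℕ → ℝ} {X : ℝ} (hv : ∀ k, 0 < v k) (hX : HasSum v X)
    (hw : Tendsto w atTop (𝓝 0))
    (hpos : Tendsto (fun n => ∑ k ∈ Finset.range n, max (w k) 0) atTop atTop)
    (hneg : Tendsto (fun n => ∑ k ∈ Finset.range n, max (-w k) 0) atTop atTop)
    {a : ℝ} (ha : |a| < 2 * X) (b : ℝ) :
    ∃ (α : ℕ → Bool) (A C : ℝ),
      Tendsto (fun n => ∑ k ∈ Finset.range n, if α k then w k else 0) atTop (𝓝 b) ∧
      HasSum (fun k => if α (2 * k) then v k else 0) A ∧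
      HasSum (fun k => if α (2 * k + 1) then v k else 0) C ∧ |a - (A - C)| ≤ X := by
  obtain ⟨K, hK⟩ := (hX.tendsto_sum_nat.eventually_const_lt
    (show |a| / 2 < X by linarith)).exists
  obtain ⟨α, hα, hαb⟩ := exists_subseries_tendsto hw hpos hneg b (2 * K)
    (fun n => if 0 ≤ a then decide (n % 2 = 0) else decide (n % 2 = 1))
  obtain ⟨A, hA⟩ := hasSum_subsum hv hX fun k => α (2 * k)
  obtain ⟨C, hC⟩ := hasSum_subsum hv hX fun k => α (2 * k + 1)
  refine ⟨α, A, C, hαb, hA, hC, ?_⟩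
  have hA0 := sum_range_le_subsum (ε := fun k => α (2 * k)) (K := 0) hv hA (by simp)
  have hC0 := sum_range_le_subsum (ε := fun k => α (2 * k + 1)) (K := 0) hv hC (by simp)
  have hA1 := subsum_le_sub_sum_range (ε := fun k => α (2 * k)) (K := 0) hv hX hA (by simp)
  have hC1 := subsum_le_sub_sum_range (ε := fun k => α (2 * k + 1)) (K := 0) hv hX hC (by simp)
  simp only [Finset.range_zero, Finset.sum_empty, sub_zero] at hA0 hC0 hA1 hC1
  rw [abs_le]
  by_cases h : 0 ≤ a
  · have h1 := sum_range_le_subsum (ε := fun k => α (2 * k)) (K := K) hv hA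
      (fun k hk => by rw [hα _ (by omega)]; simp [h])
    have h2 := subsum_le_sub_sum_range (ε := fun k => α (2 * k + 1)) (K := K) hv hX hC
      (fun k hk => by rw [hα _ (by omega)]; simp [h])
    rw [abs_of_nonneg h] at hK
    constructor <;> linarith
  · have h1 := sum_range_le_subsum (ε := fun k => α (2 * k + 1)) (K := K) hv hC
      (fun k hk => by rw [hα _ (by omega)]; simp [h])
    have h2 := subsum_le_sub_sum_range (ε := fun k => α (2 * k)) (K := K) hv hX hA
      (fun k hk => by rw [hα _ (by omega)]; simp [h])
    rw [abs_of_neg (not_le.1 h)] at hK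
    constructor <;> linarith

/-- The selection of quadruples `4k, …, 4k+3` given by `α` on even indices and by `β`, `γ` on
the indices `4k+1`, `4k+3`. -/
def interleave (α β γ : ℕ → Bool) (n : ℕ) : Bool :=
  if n % 2 = 0 then α (n / 2) else if n % 4 = 1 then β (n / 4) else γ (n / 4)

lemma hasSum_interleave_fst {v : ℕ → ℝ} {α β γ : ℕ → Bool} {A B C D : ℝ}
    (hA : HasSum (fun k => if α (2 * k) then v k else 0) A)
    (hB : HasSum (fun k => if β k then v k else 0) B)
    (hC : HasSum (fun k => if α (2 * k + 1) then v k else 0) C)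
    (hD : HasSum (fun k => if γ k then v k else 0) D) :
    HasSum (fun n => if interleave α β γ n then (if n % 4 ≤ 1 then v (n / 4) else -v (n / 4))
      else 0) (A + B + -C + -D) := by
  have h0 : ∀ k, interleave α β γ (4 * k) = α (2 * k) := fun k => by
    simp only [interleave, show 4 * k % 2 = 0 by omega, if_true, show 4 * k / 2 = 2 * k by omega]
  have h1 : ∀ k, interleave α β γ (4 * k + 1) = β k := fun k => by
    simp only [interleave, show (4 * k + 1) % 2 = 1 by omega, show (4 * k + 1) % 4 = 1 by omega,
      one_ne_zero, if_true, if_false, show (4 * k + 1) / 4 = k by omega]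
  have h2 : ∀ k, interleave α β γ (4 * k + 2) = α (2 * k + 1) := fun k => by
    simp only [interleave, show (4 * k + 2) % 2 = 0 by omega, if_true,
      show (4 * k + 2) / 2 = 2 * k + 1 by omega]
  have h3 : ∀ k, interleave α β γ (4 * k + 3) = γ k := fun k => by
    simp [interleave, show (4 * k + 3) % 2 = 1 by omega, show (4 * k + 3) % 4 = 3 by omega,
      show (4 * k + 3) / 4 = k by omega]
  refine HasSum.of_mod_four ?_ ?_ ?_ ?_
  · convert hA using 2 with k
    rw [h0, if_pos (show 4 * k % 4 ≤ 1 by omega), show 4 * k / 4 = k by omega]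
  · convert hB using 2 with k
    rw [h1, if_pos (show (4 * k + 1) % 4 ≤ 1 by omega), show (4 * k + 1) / 4 = k by omega]
  · refine hC.neg.congr_fun fun k => ?_
    rw [h2, if_neg (show ¬ (4 * k + 2) % 4 ≤ 1 by omega), show (4 * k + 2) / 4 = k by omega]
    split_ifs <;> simp
  · refine hD.neg.congr_fun fun k => ?_
    rw [h3, if_neg (show ¬ (4 * k + 3) % 4 ≤ 1 by omega), show (4 * k + 3) / 4 = k by omega]
    split_ifs <;> simp

lemma mem_achv_prod_iff {x y : ℕ → ℝ} {a b : ℝ} :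
    (a, b) ∈ achv (fun n => (x n, y n)) ↔ ∃ ε : ℕ → Bool,
      Tendsto (fun N => ∑ n ∈ Finset.range N, if ε n then x n else 0) atTop (𝓝 a) ∧
      Tendsto (fun N => ∑ n ∈ Finset.range N, if ε n then y n else 0) atTop (𝓝 b) := by
  refine exists_congr fun ε => ?_
  rw [Prod.tendsto_iff]
  simp only [Prod.fst_sum, Prod.snd_sum, apply_ite Prod.fst, apply_ite Prod.snd, Prod.fst_zero,
    Prod.snd_zero]

/-- Let `v` be a positive summable sequence with sum `X` satisfying
(i) `A(v) + A(v) = [0, 2X]` and (ii) for every `a ∈ (0, 2X)` there is a nondegenerate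
interval `I ⊆ A(v)` each of whose points `t` admits `z ∈ A(v)` with `t + z = a`. Let `w` be
a sequence of nonzero reals with alternating signs whose series is conditionally convergent.
Define pairs by `x_{4k-3} = x_{4k-2} = v_k`, `x_{4k-1} = x_{4k} = -v_k`, `y_{2k-1} = w_k`,
`y_{2k} = 0`. Then the achievement set of the pairs equals `(-2X, 2X) × ℝ`. -/
theorem stmt_17 (v w : ℕ → ℝ) (X : ℝ)
    (hvpos : ∀ k, 0 < v k) (hX : HasSum v X)
    (hi : achv v + achv v = Set.Icc 0 (2 * X))
    (hii : ∀ a ∈ Set.Ioo (0 : ℝ) (2 * X), ∃ I : Set ℝ, I ⊆ achv v ∧ I.OrdConnected ∧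
      I.Nontrivial ∧ ∀ t ∈ I, ∃ z ∈ achv v, t + z = a)
    (hwne : ∀ k, w k ≠ 0) (halt : ∀ k, w k * w (k + 1) < 0)
    (hwconv : ∃ s, Tendsto (fun N => ∑ k ∈ Finset.range N, w k) atTop (𝓝 s))
    (hwnabs : ¬ Summable fun k => |w k|) :
    achv (fun n => (((if n % 4 ≤ 1 then v (n / 4) else -v (n / 4)),
        (if n % 2 = 0 then w (n / 2) else 0)) : ℝ × ℝ)) =
      Set.Ioo (-(2 * X)) (2 * X) ×ˢ (Set.univ : Set ℝ) := by
  ext ⟨a, b⟩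
  rw [mem_achv_prod_iff]
  simp only [Set.mem_prod, Set.mem_univ, and_true, Set.mem_Ioo]
  obtain ⟨s, hs⟩ := hwconv
  constructor
  · rintro ⟨ε, hx, hy⟩
    obtain ⟨⟨h1, h1'⟩, h2, h2'⟩ := subsum_double_signed_mem hvpos hX hx
    refine ⟨lt_of_le_of_ne (by linarith) fun h => ?_, lt_of_le_of_ne h1 fun h => ?_⟩
    · have hε := h2' (by linarith)
      have hu : Tendsto (fun N => ∑ k ∈ Finset.range N, if k % 2 = 1 then w k else 0)
          atTop (𝓝 b) := by
        refine tendsto_sum_range_even_iff.1 (hy.congr fun N => Finset.sum_congr rfl fun n _ => ?_)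
        have := hε n
        split_ifs <;> first | rfl | grind
      refine not_tendsto_sum_neg_one_pow_mul halt hwnabs (s - 2 * b) ?_
      refine (hs.sub (hu.const_mul 2)).congr fun N => ?_
      rw [Finset.mul_sum, ← Finset.sum_sub_distrib]
      refine Finset.sum_congr rfl fun k _ => ?_
      rcases Nat.even_or_odd k with hk | hk
      · rw [hk.neg_one_pow, if_neg (by grind)]; ring
      · rw [hk.neg_one_pow, if_pos (by grind)]; ring
    · have hε := h1' h
      have hu : Tendsto (fun N => ∑ k ∈ Finset.range N, if k % 2 = 0 then w k else 0)
          atTop (𝓝 b) := by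
        refine tendsto_sum_range_even_iff.1 (hy.congr fun N => Finset.sum_congr rfl fun n _ => ?_)
        have := hε n
        split_ifs <;> first | rfl | grind
      refine not_tendsto_sum_neg_one_pow_mul halt hwnabs (2 * b - s) ?_
      refine ((hu.const_mul 2).sub hs).congr fun N => ?_
      rw [Finset.mul_sum, ← Finset.sum_sub_distrib]
      refine Finset.sum_congr rfl fun k _ => ?_
      rcases Nat.even_or_odd k with hk | hk
      · rw [hk.neg_one_pow, if_pos (by grind)]; ring
      · rw [hk.neg_one_pow, if_neg (by grind)]; ring
  · intro ha
    have hw : Tendsto w atTop (𝓝 0) := by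
      have := (hs.comp (tendsto_add_atTop_nat 1)).sub hs
      simpa [Finset.sum_range_succ] using this
    have hpos := tendsto_sum_max_atTop ⟨s, hs⟩ hwnabs
    have hneg := tendsto_sum_max_atTop (w := fun k => -w k)
      ⟨-s, by simpa [Finset.sum_neg_distrib] using hs.neg⟩ (by simpa using hwnabs)
    obtain ⟨α, A, C, hα, hA, hC, hAC⟩ :=
      exists_selection_near hvpos hX hw hpos hneg (abs_lt.2 ha) b
    obtain ⟨β, γ, B, D, hB, hD, hBD⟩ := sub_mem_of_achv_add_achv hvpos hX hi hAC
    refine ⟨interleave α β γ, ?_, ?_⟩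
    · convert (hasSum_interleave_fst hA hB hC hD).tendsto_sum_nat using 2
      linarith
    · refine (tendsto_sum_range_even_iff.2 hα).congr fun N => Finset.sum_congr rfl fun n _ => ?_
      by_cases hn : n % 2 = 0 <;> simp [interleave, hn]
end

section
/- Let ∑ x_k be a conditionally convergent series in ℝ, and let ∑ y_k be an absolutely convergent series in ℝ such that the map ε ↦ ∑_k ε(k)·y(k) from {0,1}^ℕ to ℝ is injective. Then the intersection over all permutations σ of ℕ of the achievement sets of the rearranged sequences of pairs satisfies ⋂_{σ} A((x_{σ(k)}, y_{σ(k)})_k) = A_abs((x_k, y_k)_k), where A_abs(z) = {∑_k ε(k)·z(k) : ε ∈ {0,1}^ℕ and ∑_k ε(k)·‖z(k)‖ < ∞}. -/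
open Filter Topology

/-- The absolute achievement set: sums of absolutely convergent subseries. -/
def absAchv {X : Type*} [NormedAddCommGroup X] (x : ℕ → X) : Set X :=
  {s | ∃ ε : ℕ → Bool, (Summable fun n => ‖if ε n then x n else 0‖) ∧
    HasSum (fun n => if ε n then x n else 0) s}

/-- Every injective `f : ℕ → ℕ` becomes strictly increasing after reordering its domain. -/
theorem exists_perm_strictMono_comp {f : ℕ → ℕ} (hf : Function.Injective f) :
    ∃ σ : Equiv.Perm ℕ, StrictMono (f ∘ σ) := by
  classical
  have : Infinite (Set.range f) := (Set.infinite_range_of_injective hf).to_subtype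
  let o : ℕ ≃o Set.range f := Nat.Subtype.orderIsoOfNat (Set.range f)
  refine ⟨o.toEquiv.trans (Equiv.ofInjective f hf).symm, fun i j hij => ?_⟩
  have key (i : ℕ) : f ((Equiv.ofInjective f hf).symm (o i)) = o i :=
    Equiv.apply_ofInjective_symm hf (o i)
  simpa [key] using o.strictMono hij

/-- If `f ∘ σ` is strictly increasing, then every sublevel set of `f` is listed by `σ` as an
initial segment. -/
theorem map_range_card_eq_of_strictMono_comp {f : ℕ → ℕ} {σ : Equiv.Perm ℕ}
    (hσ : StrictMono (f ∘ σ)) {t : ℕ} {G : Finset ℕ} (hG : ∀ k, f k < t ↔ k ∈ G) :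
    (Finset.range G.card).map σ.toEmbedding = G := by
  have hex : ∃ i, t ≤ f (σ i) := ⟨t, hσ.le_apply⟩
  have hmap : (Finset.range (Nat.find hex)).map σ.toEmbedding = G := by
    ext k
    obtain ⟨i, rfl⟩ := σ.surjective k
    rw [← hG, Finset.mem_map_equiv, Equiv.symm_apply_apply, Finset.mem_range]
    refine ⟨fun h => not_le.1 (Nat.find_min hex h), fun h => ?_⟩
    by_contra! hle
    exact absurd ((Nat.find_spec hex).trans (hσ.monotone hle)) (not_le.2 h)
  have hcard : Nat.find hex = G.card := by
    simpa using congrArg Finset.card hmap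
  rwa [← hcard]

/-- If finite sets `G n` interlace with the initial segments `[0, a n)`, then some permutation of
`ℕ` lists every `G n` as an initial segment. -/
theorem exists_perm_map_range_card_eq {a : ℕ → ℕ} {G : ℕ → Finset ℕ} (ha : StrictMono a)
    (ha0 : a 0 = 0) (hlow : ∀ n, Finset.range (a n) ⊆ G n)
    (hup : ∀ n, G n ⊆ Finset.range (a (n + 1))) :
    ∃ σ : Equiv.Perm ℕ, ∀ n, (Finset.range (G n).card).map σ.toEmbedding = G n := by
  classical
  have hblock (k : ℕ) : ∃ n, a n ≤ k ∧ k < a (n + 1) := by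
    have hex : ∃ n, k < a (n + 1) := ⟨k, (Nat.lt_succ_self k).trans_le ha.le_apply⟩
    refine ⟨Nat.find hex, ?_, Nat.find_spec hex⟩
    rcases h : Nat.find hex with _ | m
    · simp [ha0]
    · exact not_lt.1 (Nat.find_min hex (h ▸ Nat.lt_succ_self m))
  choose L hL hL' using hblock
  let f : ℕ → ℕ := fun k => k + if k ∈ G (L k) then a (L k) else a (L k + 1)
  have hf_ge (k : ℕ) : k + a (L k) ≤ f k := by
    have := ha (lt_add_one (L k))
    simp only [f]
    split_ifs <;> omega
  have hf_le (k : ℕ) : f k ≤ k + a (L k + 1) := by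
    have := ha (lt_add_one (L k))
    simp only [f]
    split_ifs <;> omega
  have hG (n k : ℕ) : f k < a n + a (n + 1) ↔ k ∈ G n := by
    have hn := ha (lt_add_one n)
    rcases lt_trichotomy (L k) n with h | rfl | h
    · have h1 : a (L k + 1) ≤ a n := ha.monotone h
      have h2 := hf_le k
      have h3 := hL' k
      exact iff_of_true (by omega) (hlow n (Finset.mem_range.2 (by omega)))
    · have h1 := hL k
      have h2 := hL' k
      by_cases hk : k ∈ G (L k)
      · exact iff_of_true (by simp only [f, if_pos hk]; omega) hk
      · exact iff_of_false (by simp only [f, if_neg hk]; omega) hk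
    · have h1 : a (n + 1) ≤ a (L k) := ha.monotone h
      have h2 := hf_ge k
      have h3 := hL k
      refine iff_of_false (by omega) fun hk => ?_
      have := Finset.mem_range.1 (hup n hk)
      omega
  have hlt (k l : ℕ) (h : L k < L l) : f k < f l := by
    have h1 : a (L k + 1) ≤ a (L l) := ha.monotone h
    have := hf_le k
    have := hL' k
    have := hf_ge l
    have := hL l
    omega
  have hf : Function.Injective f := fun k l hkl => by
    have hLkl : L k = L l := by
      rcases lt_trichotomy (L k) (L l) with h | h | h
      · exact absurd hkl (hlt k l h).ne
      · exact h
      · exact absurd hkl (hlt l k h).ne'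
    have hiff : k ∈ G (L l) ↔ l ∈ G (L l) := by
      rw [← hG, ← hG, hkl]
    simp only [f, hLkl, hiff] at hkl
    exact Nat.add_right_cancel hkl
  obtain ⟨σ, hσ⟩ := exists_perm_strictMono_comp hf
  exact ⟨σ, fun n => map_range_card_eq_of_strictMono_comp hσ (hG n)⟩

/-- A series all of whose rearrangements converge to `s` converges unconditionally to `s`. -/
theorem hasSum_of_forall_perm_tendsto {X : Type*} [AddCommMonoid X] [TopologicalSpace X]
    {u : ℕ → X} {s : X}
    (h : ∀ σ : Equiv.Perm ℕ,
      Tendsto (fun N => ∑ n ∈ Finset.range N, u (σ n)) atTop (𝓝 s)) :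
    HasSum u s := by
  classical
  by_contra hns
  obtain ⟨U, hU, hbad⟩ : ∃ U ∈ 𝓝 s, ∀ F : Finset ℕ, ∃ G, F ⊆ G ∧ ∑ i ∈ G, u i ∉ U := by
    simpa [HasSum, Filter.Tendsto, Filter.le_def, Filter.mem_map, Filter.mem_atTop_sets]
      using hns
  choose g hg hgU using hbad
  let a : ℕ → ℕ := fun n =>
    Nat.rec 0 (fun _ b => b + (g (Finset.range b)).sup id + 1) n
  have ha_succ (n : ℕ) : a (n + 1) = a n + (g (Finset.range (a n))).sup id + 1 := rfl
  have ha : StrictMono a := strictMono_nat_of_lt_succ fun n => by rw [ha_succ]; omega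
  obtain ⟨σ, hσ⟩ := exists_perm_map_range_card_eq (G := fun n => g (Finset.range (a n))) ha rfl
    (fun n => hg _) fun n k hk => by
      have : k ≤ (g (Finset.range (a n))).sup id := Finset.le_sup (f := id) hk
      rw [Finset.mem_range, ha_succ]
      omega
  obtain ⟨M, hM⟩ := eventually_atTop.1 ((h σ).eventually_mem hU)
  have hcard : M ≤ (g (Finset.range (a M))).card :=
    calc M ≤ a M := ha.le_apply
      _ = (Finset.range (a M)).card := (Finset.card_range _).symm
      _ ≤ _ := Finset.card_le_card (hg _)
  refine hgU (Finset.range (a M)) ?_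
  have := hM _ hcard
  rw [← hσ M, Finset.sum_map]
  exact this

/-- If `∑ x_k` is conditionally convergent in `ℝ`, and `∑ y_k` is absolutely
convergent with `ε ↦ ∑ ε_k y_k` injective, then the intersection over all permutations `σ`
of the achievement sets of the rearranged pair sequences equals the absolute achievement set
of the pair sequence. -/
theorem stmt_18 (x y : ℕ → ℝ)
    (hx_conv : ∃ s, Tendsto (fun N => ∑ k ∈ Finset.range N, x k) atTop (𝓝 s))
    (hx_nabs : ¬ Summable fun k => |x k|)
    (hy : Summable fun k => |y k|)
    (hinj : Function.Injective fun ε : ℕ → Bool => ∑' k, if ε k then y k else 0) :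
    ⋂ σ : Equiv.Perm ℕ, achv (fun k => ((x (σ k), y (σ k)) : ℝ × ℝ)) =
      absAchv (fun k => ((x k, y k) : ℝ × ℝ)) := by
  ext s
  rw [Set.mem_iInter]
  constructor
  · intro hs
    choose ε hε using hs
    let δ : Equiv.Perm ℕ → ℕ → Bool := fun σ k => ε σ (σ.symm k)
    have hδ (σ : Equiv.Perm ℕ) : Tendsto (fun N => ∑ n ∈ Finset.range N,
        if δ σ (σ n) then (x (σ n), y (σ n)) else 0) atTop (𝓝 s) := by
      simpa [δ] using hε σ
    have hsum (σ : Equiv.Perm ℕ) : ∑' k, (if δ σ k then y k else 0) = s.2 := by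
      have hsummable : Summable fun k => if δ σ k then y k else 0 :=
        hy.of_norm_bounded fun k => by split_ifs <;> simp
      have h1 := ((Equiv.hasSum_iff σ).2 hsummable.hasSum).tendsto_sum_nat
      have h2 := (continuous_snd.tendsto s).comp (hδ σ)
      refine tendsto_nhds_unique h1 (h2.congr fun N => ?_)
      simp only [Function.comp_apply, Prod.snd_sum]
      exact Finset.sum_congr rfl fun n _ => by split_ifs <;> rfl
    have hconst (σ : Equiv.Perm ℕ) : δ σ = δ 1 := hinj ((hsum σ).trans (hsum 1).symm)
    have hHas : HasSum (fun k => if δ 1 k then (x k, y k) else 0) s :=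
      hasSum_of_forall_perm_tendsto fun σ => by simpa only [hconst σ] using hδ σ
    exact ⟨δ 1, summable_norm_iff.2 hHas.summable, hHas⟩
  · rintro ⟨ε, -, hε⟩ σ
    exact ⟨ε ∘ σ, ((Equiv.hasSum_iff σ).2 hε).tendsto_sum_nat⟩
end
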